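/- arXiv:1309.1051 — 5 statements merged into one kernel-verified Lean document; each statement's English description precedes it below -/
import Mathlib

section
/- Let t ≥ 4 and let ⟨u_1, u_2, …, u_t⟩ be a chordless path in a finite undirected simple graph G such that u_1 and u_t lie in the same connected component of the induced subgraph G' = G − (⋃_{i=2}^{t−1} Adj[u_i] − {u_1, u_t}). Then G contains a chordless cycle with at least t vertices. -/
variable {V : Type*}

/-- A simple path: a list of pairwise distinct vertices in which
consecutive vertices are adjacent. -/
def IsSimplePathL (G : SimpleGraph V) (p : List V) : Prop :=
  p.Nodup ∧ p.Chain' G.Adj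

/-- A chordless path: a simple path with no edge between non-consecutive vertices. -/
def IsChordlessPathL (G : SimpleGraph V) (p : List V) : Prop :=
  IsSimplePathL G p ∧
    ∀ i j : Fin p.length, (i : ℕ) + 1 < (j : ℕ) → ¬ G.Adj (p.get i) (p.get j)

/-- A cycle: a simple path ⟨v₁, …, v_k⟩ (k ≥ 3) together with the edge (v_k, v₁). -/
def IsCycleL (G : SimpleGraph V) (p : List V) : Prop :=
  IsSimplePathL G p ∧ 3 ≤ p.length ∧
    ∀ hp : p ≠ [], G.Adj (p.getLast hp) (p.head hp)

/-- A chordless cycle: a cycle whose only edges among its vertices are the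
consecutive ones and the wrap-around edge. -/
def IsChordlessCycleL (G : SimpleGraph V) (p : List V) : Prop :=
  IsCycleL G p ∧
    ∀ i j : Fin p.length, (i : ℕ) < (j : ℕ) → G.Adj (p.get i) (p.get j) →
      (j : ℕ) = (i : ℕ) + 1 ∨ ((i : ℕ) = 0 ∧ (j : ℕ) = p.length - 1)

/-- The subgraph induced on a vertex set `S` (all other vertices become isolated). -/
def inducedOn (G : SimpleGraph V) (S : Set V) : SimpleGraph V where
  Adj a b := G.Adj a b ∧ a ∈ S ∧ b ∈ S
  symm := ⟨fun _ _ h => ⟨h.1.symm, h.2.2, h.2.1⟩⟩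
  loopless := ⟨fun a h => G.loopless.irrefl a h.1⟩

/-- The vertex set of G' = G − (⋃_{i=2}^{t-1} Adj[u_i] − {u₁, u_t}) for the
path p = ⟨u₁, …, u_t⟩: a vertex is kept iff it is u₁ or u_t, or it lies outside
the closed neighborhood of every interior vertex of p. -/
def keptSet (G : SimpleGraph V) (p : List V) : Set V :=
  {v | (∃ hp : p ≠ [], v = p.head hp ∨ v = p.getLast hp) ∨
       ∀ i : Fin p.length, 1 ≤ (i : ℕ) → (i : ℕ) + 1 < p.length →
         v ≠ p.get i ∧ ¬ G.Adj (p.get i) v}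

/-- A shortest path, given as a function on naturals. -/
theorem exists_shortest_fun {W : Type*} (H : SimpleGraph W) {a b : W} (h : H.Reachable a b) :
    ∃ (m : ℕ) (q : ℕ → W), q 0 = a ∧ q m = b ∧ (∀ i, i < m → H.Adj (q i) (q (i + 1))) ∧
      (∀ i j, i ≤ m → j ≤ m → q i = q j → i = j) ∧
      (∀ i j, i < j → j ≤ m → H.Adj (q i) (q j) → j = i + 1) := by
  obtain ⟨w, hw⟩ := h.exists_walk_length_eq_dist
  have hpath := w.isPath_of_length_eq_dist hw
  refine ⟨w.length, w.getVert, by simp, by simp, fun i hi => w.adj_getVert_succ hi, ?_, ?_⟩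
  · intro i j hi hj hij
    exact hpath.getVert_injOn hi hj hij
  · intro i j hij hj hadj
    have h1 := SimpleGraph.dist_le ((w.take i).append (SimpleGraph.Walk.cons hadj (w.drop j)))
    rw [SimpleGraph.Walk.length_append, SimpleGraph.Walk.length_cons,
      SimpleGraph.Walk.take_length, SimpleGraph.Walk.drop_length, ← hw] at h1
    omega

/-- A chordless cycle built from a function on naturals. -/
theorem chordlessCycle_ofFn {W : Type*} (G : SimpleGraph W) (n : ℕ) (hn : 3 ≤ n) (f : ℕ → W)
    (hinj : ∀ i j, i < j → j < n → f i ≠ f j)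
    (hadj : ∀ i, i + 1 < n → G.Adj (f i) (f (i + 1)))
    (hwrap : G.Adj (f (n - 1)) (f 0))
    (hch : ∀ i j, i < j → j < n → G.Adj (f i) (f j) → j = i + 1 ∨ (i = 0 ∧ j = n - 1)) :
    IsChordlessCycleL G (List.ofFn (fun i : Fin n => f i)) := by
  refine ⟨⟨⟨?_, ?_⟩, by simpa using hn, ?_⟩, ?_⟩
  · rw [List.nodup_ofFn]
    intro i j hij
    rcases lt_trichotomy (i : ℕ) j with h | h | h
    · exact absurd hij (hinj i j h j.2)
    · exact Fin.ext h
    · exact absurd hij.symm (hinj j i h i.2)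
  · change List.IsChain _ _
    rw [List.isChain_ofFn]
    intro i hi
    exact hadj i hi
  · intro hp
    rw [List.getLast_ofFn, List.head_ofFn]
    exact hwrap
  · intro i j hij h
    have hj : (j : ℕ) < n := by simpa using j.2
    simp only [List.get_eq_getElem, List.getElem_ofFn] at h
    simpa using hch i j hij hj h

/-- Let t ≥ 4 and let ⟨u₁, …, u_t⟩ be a chordless path in a finite
undirected simple graph G such that u₁ and u_t lie in the same connected
component of G' = G − (⋃_{i=2}^{t-1} Adj[u_i] − {u₁, u_t}). Then G contains a
chordless cycle with at least t vertices. -/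
theorem stmt1 {V : Type*} [Fintype V] (G : SimpleGraph V) (t : ℕ) (ht : 4 ≤ t)
    (p : List V) (hl : p.length = t) (hp : IsChordlessPathL G p)
    (hreach : (inducedOn G (keptSet G p)).Reachable
      (p.head (by intro h; rw [h] at hl; simp at hl; omega))
      (p.getLast (by intro h; rw [h] at hl; simp at hl; omega))) :
    ∃ c : List V, t ≤ c.length ∧ IsChordlessCycleL G c := by
  classical
  have hne : p ≠ [] := by intro h; rw [h] at hl; simp at hl; omega
  obtain ⟨⟨hnd, hchain⟩, hcl⟩ := hp
  replace hchain : List.IsChain G.Adj p := hchain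
  obtain ⟨m, q, hq0, hqm, hqadj, hqinj, hqch⟩ := exists_shortest_fun _ hreach.symm
  have hhead : p.head hne = p[0]'(by omega) := by
    rw [List.head_eq_getElem]
  have hlast : p.getLast hne = p[t - 1]'(by omega) := by
    rw [List.getLast_eq_getElem]; simp [hl]
  have hpcl : ∀ i j (hi : i < t) (hj : j < t), i + 1 < j →
      ¬ G.Adj (p[i]'(by omega)) (p[j]'(by omega)) := by
    intro i j hi hj hij
    exact hcl ⟨i, by omega⟩ ⟨j, by omega⟩ hij
  have hpinj : ∀ i j (hi : i < t) (hj : j < t), p[i]'(by omega) = p[j]'(by omega) → i = j := by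
    intro i j hi hj h
    exact (hnd.getElem_inj_iff).1 h
  have hpadj : ∀ i (hi : i + 1 < t), G.Adj (p[i]'(by omega)) (p[i + 1]'(by omega)) := by
    intro i hi
    exact hchain.getElem i (by omega)
  rw [hlast] at hq0
  rw [hhead] at hqm
  have hm0 : m ≠ 0 := by
    rintro rfl
    have := hpinj _ _ (by omega) (by omega) (hq0.symm.trans hqm)
    omega
  have hm1 : m ≠ 1 := by
    rintro rfl
    have h := (hqadj 0 (by omega)).1
    rw [zero_add, hqm, hq0] at h
    exact hpcl _ _ (by omega) (by omega) (by omega) h.symm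
  -- all vertices of q are kept
  have hkept : ∀ k, k ≤ m → q k ∈ keptSet G p := by
    intro k hk
    rcases Nat.lt_or_ge k m with h | h
    · exact (hqadj k h).2.1
    · have h2 := (hqadj (m - 1) (by omega)).2.2
      rwa [show m - 1 + 1 = k by omega] at h2
  have hqint : ∀ k, 1 ≤ k → k < m → ∀ i (hi : i + 1 < t), 1 ≤ i →
      q k ≠ p[i]'(by omega) ∧ ¬ G.Adj (p[i]'(by omega)) (q k) := by
    intro k hk hkm i hi hi1
    rcases hkept k hkm.le with ⟨_, h | h⟩ | h
    · rw [hhead, ← hqm] at h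
      have := hqinj _ _ hkm.le le_rfl h
      omega
    · rw [hlast, ← hq0] at h
      have := hqinj _ _ hkm.le (by omega) h
      omega
    · exact h ⟨i, by omega⟩ hi1 (by simp only; omega)
  have hqG : ∀ i j, i < j → j ≤ m → G.Adj (q i) (q j) → j = i + 1 := by
    intro i j hij hj h
    exact hqch i j hij hj ⟨h, hkept i (by omega), hkept j hj⟩
  let f : ℕ → V := fun i => if h : i < t then p[i]'(by omega) else q (i - t + 1)
  have hf1 : ∀ i (h : i < t), f i = p[i]'(by omega) := fun i h => dif_pos h
  have hf2 : ∀ i, ¬ i < t → f i = q (i - t + 1) := fun i h => dif_neg h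
  refine ⟨List.ofFn (fun i : Fin (t + m - 1) => f i), by simp; omega,
    chordlessCycle_ofFn G (t + m - 1) (by omega) f ?_ ?_ ?_ ?_⟩
  · intro i j hij hj h
    by_cases hjt : j < t
    · rw [hf1 i (by omega), hf1 j hjt] at h
      have := hpinj _ _ (by omega) hjt h
      omega
    · rw [hf2 j hjt] at h
      by_cases hit : i < t
      · rw [hf1 i hit] at h
        rcases Nat.eq_zero_or_pos i with rfl | hi
        · rw [← hqm] at h
          have := hqinj _ _ le_rfl (by omega) h
          omega
        · by_cases hi' : i + 1 < t
          · exact (hqint _ (by omega) (by omega) i hi' hi).1 h.symm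
          · obtain rfl : i = t - 1 := by omega
            rw [← hq0] at h
            have := hqinj _ _ (by omega) (by omega) h
            omega
      · rw [hf2 i hit] at h
        have := hqinj _ _ (by omega) (by omega) h
        omega
  · intro i hi
    by_cases h1 : i + 1 < t
    · rw [hf1 i (by omega), hf1 _ h1]
      exact hpadj i h1
    · rw [hf2 _ h1]
      by_cases h2 : i < t
      · obtain rfl : i = t - 1 := by omega
        rw [hf1 _ h2, ← hq0, show t - 1 + 1 - t + 1 = 0 + 1 by omega]
        exact (hqadj 0 (by omega)).1
      · rw [hf2 _ h2, show i + 1 - t + 1 = (i - t + 1) + 1 by omega]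
        exact (hqadj _ (by omega)).1
  · rw [hf1 0 (by omega), hf2 _ (by omega), ← hqm]
    have h := (hqadj (m - 1) (by omega)).1
    rwa [show m - 1 + 1 = m by omega, show m - 1 = t + m - 1 - 1 - t + 1 by omega] at h
  · intro i j hij hj h
    by_cases hjt : j < t
    · rw [hf1 i (by omega), hf1 j hjt] at h
      by_contra hcon
      exact hpcl i j (by omega) hjt (by omega) h
    · rw [hf2 j hjt] at h
      by_cases hit : i < t
      · rw [hf1 i hit] at h
        rcases Nat.eq_zero_or_pos i with rfl | hi
        · rw [← hqm] at h
          have := hqG _ _ (by omega) le_rfl h.symm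
          omega
        · by_cases hi' : i + 1 < t
          · exact absurd h (hqint _ (by omega) (by omega) i hi' hi).2
          · obtain rfl : i = t - 1 := by omega
            rw [← hq0] at h
            have := hqG _ _ (by omega) (by omega) h
            omega
      · rw [hf2 i hit] at h
        have := hqG _ _ (by omega) (by omega) h
        omega
end

section
/- Let t ≥ 4, let p = ⟨u_1, u_2, …, u_t⟩ be a chordless path in a finite undirected simple graph G, let G' = G − (⋃_{i=2}^{t−1} Adj[u_i] − {u_1, u_t}), and let q = ⟨v_1, v_2, …, v_k⟩ be a shortest path (with respect to the number of edges) in G' with v_1 = u_1 and v_k = u_t. Then the concatenation p ∪ q = ⟨v_1 = u_1, u_2, …, u_t = v_k, v_{k−1}, …, v_2⟩ is a chordless cycle in G of length t + k − 2, and since k ≥ 2 this length is at least t. -/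
variable {V : Type*}

theorem aux_q_chordless {V : Type*} (H : SimpleGraph V) (q : List V) (hq : q ≠ [])
    (hpath : IsSimplePathL H q)
    (hshort : ∀ r : List V, ∀ hr : r ≠ [], IsSimplePathL H r →
      r.head hr = q.head hq → r.getLast hr = q.getLast hq → q.length ≤ r.length)
    (i j : ℕ) (hij : i + 1 < j) (hj : j < q.length) : ¬ H.Adj q[i] q[j] := by
  intro hadj
  obtain ⟨hnd, hch⟩ := hpath
  have hr : q.take (i+1) ++ q.drop j ≠ [] := by
    intro h
    have := congrArg List.length h
    simp at this
    omega
  have := hshort _ hr ?_ ?_ ?_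
  · simp at this
    omega
  · constructor
    · have h1 : (q.take (i+1) ++ q.drop j).Sublist (q.take j ++ q.drop j) :=
        List.Sublist.append (List.take_sublist_take_left (by omega)) (List.Sublist.refl _)
      rw [List.take_append_drop] at h1
      exact h1.nodup hnd
    · replace hch := List.isChain_iff_getElem.1 hch
      refine List.isChain_iff_getElem.2 ?_
      intro m hm
      simp at hm
      rcases lt_trichotomy m i with h | h | h
      · have := hch m (by omega)
        grind
      · grind
      · have := hch (j + (m - (i+1))) (by omega)
        have hl : (q.take (i+1)).length = i + 1 := by simp; omega
        rw [List.getElem_append_right (by omega), List.getElem_append_right (by omega)]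
        simp only [List.getElem_drop, hl]
        convert this using 2
        omega
  · grind
  · grind

/-- Let t ≥ 4, let p = ⟨u₁, …, u_t⟩ be a chordless path in a finite
undirected simple graph G, let G' = G − (⋃_{i=2}^{t-1} Adj[u_i] − {u₁, u_t}),
and let q = ⟨v₁, …, v_k⟩ be a shortest path in G' with v₁ = u₁ and v_k = u_t.
Then p ∪ q = ⟨v₁ = u₁, u₂, …, u_t = v_k, v_{k-1}, …, v₂⟩ is a chordless cycle in
G of length t + k − 2, and (since k ≥ 2) this length is at least t. -/
theorem stmt3 {V : Type*} [Fintype V] (G : SimpleGraph V) (p : List V)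
    (ht : 4 ≤ p.length) (hp : IsChordlessPathL G p)
    (q : List V) (hq : q ≠ [])
    (hqpath : IsSimplePathL (inducedOn G (keptSet G p)) q)
    (hq1 : q.head hq = p.head (by intro h; rw [h] at ht; simp at ht))
    (hqk : q.getLast hq = p.getLast (by intro h; rw [h] at ht; simp at ht))
    (hshort : ∀ r : List V, ∀ hr : r ≠ [],
      IsSimplePathL (inducedOn G (keptSet G p)) r →
      r.head hr = p.head (by intro h; rw [h] at ht; simp at ht) →
      r.getLast hr = p.getLast (by intro h; rw [h] at ht; simp at ht) →
      q.length ≤ r.length) :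
    IsChordlessCycleL G (p ++ ((q.drop 1).dropLast).reverse) ∧
    (p ++ ((q.drop 1).dropLast).reverse).length = p.length + q.length - 2 ∧
    p.length ≤ (p ++ ((q.drop 1).dropLast).reverse).length := by
  have hp0 : p ≠ [] := by intro h; rw [h] at ht; simp at ht
  obtain ⟨⟨hpnd, hpch⟩, hpc⟩ := hp
  have hQ := aux_q_chordless _ q hq hqpath
    (fun r hr h1 h2 h3 => hshort r hr h1 (h2.trans hq1) (h3.trans hqk))
  clear hshort
  obtain ⟨hqnd, hqch⟩ := hqpath
  have hP : ∀ i j (hij : i + 1 < j) (hj : j < p.length), ¬ G.Adj p[i] p[j] :=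
    fun i j hij hj => hpc ⟨i, by omega⟩ ⟨j, hj⟩ hij
  clear hpc
  have hPn : ∀ i j (hi : i < p.length) (hj : j < p.length), p[i] = p[j] → i = j :=
    fun i j hi hj h => (hpnd.getElem_inj_iff).1 h
  have hQn : ∀ i j (hi : i < q.length) (hj : j < q.length), q[i] = q[j] → i = j :=
    fun i j hi hj h => (hqnd.getElem_inj_iff).1 h
  have hPa : ∀ i (hi : i + 1 < p.length), G.Adj p[i] p[i+1] :=
    fun i hi => List.isChain_iff_getElem.1 hpch i hi
  have hQa : ∀ i (hi : i + 1 < q.length), (inducedOn G (keptSet G p)).Adj q[i] q[i+1] :=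
    fun i hi => List.isChain_iff_getElem.1 hqch i hi
  have hl0 : 0 < q.length := List.length_pos_iff.2 hq
  rw [List.head_eq_getElem, List.head_eq_getElem] at hq1
  rw [List.getLast_eq_getElem, List.getLast_eq_getElem] at hqk
  have hk3 : 3 ≤ q.length := by
    by_contra hlt
    have h12 : q.length = 1 ∨ q.length = 2 := by omega
    rcases h12 with h | h
    · have : q[q.length - 1] = q[0] := by simp [h]
      rw [hqk, hq1] at this
      have := hPn _ _ _ _ this
      omega
    · have h1 := (hQa 0 (by omega)).1
      have : q[q.length - 1] = q[0+1] := by simp [h]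
      rw [← this, hqk, hq1] at h1
      exact hP _ _ (by omega) _ h1
  have hK : ∀ i (hi : i < q.length), q[i] ∈ keptSet G p := by
    intro i hi
    by_cases h : i + 1 < q.length
    · exact (hQa i h).2.1
    · obtain ⟨m, rfl⟩ : ∃ m, i = m + 1 := ⟨i - 1, by omega⟩
      exact (hQa m hi).2.2
  have hQG : ∀ i j (hij : i + 1 < j) (hj : j < q.length), ¬ G.Adj q[i] q[j] :=
    fun i j hij hj h => hQ i j hij hj ⟨h, hK _ _, hK _ _⟩
  have hQaG : ∀ i (hi : i + 1 < q.length), G.Adj q[i] q[i+1] := fun i hi => (hQa i hi).1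
  have hI : ∀ i (hi : 1 ≤ i) (hi' : i + 1 < p.length) j (hj : 1 ≤ j) (hj' : j + 1 < q.length),
      q[j] ≠ p[i] ∧ ¬ G.Adj p[i] q[j] := by
    intro i hi hi' j hj hj'
    rcases hK j (by omega) with ⟨_, h | h⟩ | h
    · rw [List.head_eq_getElem, ← hq1] at h
      have := hQn _ _ _ _ h
      omega
    · rw [List.getLast_eq_getElem, ← hqk] at h
      have := hQn _ _ _ _ h
      omega
    · exact h ⟨i, by omega⟩ hi hi'
  clear hK hQ hQa hqch hpch
  have hlen : (p ++ ((q.drop 1).dropLast).reverse).length = p.length + q.length - 2 := by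
    simp
    omega
  generalize hc : p ++ ((q.drop 1).dropLast).reverse = w at *
  have hc1 : ∀ i (hi : i < p.length), w[i]'(by omega) = p[i] := by
    intro i hi
    subst hc
    grind
  have hc2 : ∀ i (hi : p.length ≤ i) (hi' : i < w.length),
      w[i] = q[p.length + q.length - 2 - i]'(by omega) := by
    intro i hi hi'
    subst hc
    rw [List.getElem_append_right hi]
    simp only [List.getElem_reverse, List.getElem_dropLast, List.getElem_drop]
    congr 1
    simp
    omega
  have hne : ∀ i j (hij : i < j) (hj : j < w.length), w[i] ≠ w[j] := by
    intro i j hij hj h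
    by_cases h1 : j < p.length
    · rw [hc1 i (by omega), hc1 j h1] at h
      have := hPn _ _ _ _ h
      omega
    · rw [hc2 j (by omega)] at h
      by_cases h2 : i < p.length
      · rw [hc1 i h2] at h
        by_cases h3 : i = 0
        · subst h3
          rw [← hq1] at h
          have := hQn _ _ _ _ h
          omega
        · by_cases h4 : i = p.length - 1
          · subst h4
            rw [← hqk] at h
            have := hQn _ _ _ _ h
            omega
          · exact (hI i (by omega) (by omega) _ (by omega) (by omega)).1 h.symm
      · rw [hc2 i (by omega)] at h
        have := hQn _ _ _ _ h
        omega
  have hch : ∀ i j (hij : i < j) (hj : j < w.length), G.Adj w[i] w[j] →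
      j = i + 1 ∨ (i = 0 ∧ j = w.length - 1) := by
    intro i j hij hj h
    by_contra hcon
    by_cases h1 : j < p.length
    · rw [hc1 i (by omega), hc1 j h1] at h
      exact hP _ _ (by omega) _ h
    · rw [hc2 j (by omega)] at h
      by_cases h2 : i < p.length
      · rw [hc1 i h2] at h
        by_cases h3 : i = 0
        · subst h3
          rw [← hq1] at h
          exact hQG _ _ (by omega) _ h
        · by_cases h4 : i = p.length - 1
          · subst h4
            rw [← hqk] at h
            exact hQG _ _ (by omega) _ h.symm
          · exact (hI i (by omega) (by omega) _ (by omega) (by omega)).2 h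
      · rw [hc2 i (by omega)] at h
        exact hQG _ _ (by omega) _ h.symm
  refine ⟨⟨⟨⟨?_, ?_⟩, by omega, ?_⟩, fun i j hij h => hch i j hij j.2 h⟩, hlen, by omega⟩
  · rw [List.Nodup, List.pairwise_iff_getElem]
    exact fun i j _ hj hij => hne i j hij hj
  · refine List.isChain_iff_getElem.2 ?_
    intro i hi
    by_cases h1 : i + 1 < p.length
    · rw [hc1 i (by omega), hc1 _ h1]
      exact hPa i h1
    · rw [hc2 (i+1) (by omega)]
      have h5 := hQaG (p.length + q.length - 2 - (i + 1)) (by omega)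
      by_cases h2 : i < p.length
      · obtain rfl : i = p.length - 1 := by omega
        rw [hc1 _ h2, ← hqk]
        convert h5.symm using 2
        omega
      · rw [hc2 i (by omega)]
        convert h5.symm using 2
        omega
  · intro hc0
    rw [List.head_eq_getElem, List.getLast_eq_getElem, hc1 0 (by omega),
      hc2 _ (by omega), ← hq1]
    convert (hQaG 0 (by omega)).symm using 2
    omega
end

section
/- Let p = ⟨v_1, v_2, …, v_k⟩ be a chordless path in a finite undirected simple graph G and let v ∈ Adj(v_k) with v ≠ v_{k−1}. Then exactly one of the following holds: (i) ⟨p, v⟩ = ⟨v_1, v_2, …, v_k, v⟩ is a chordless path; (ii) (v_{k−1}, v) ∈ E; or (iii) there exists i ∈ {1, …, k−2} such that ⟨v_i, v_{i+1}, …, v_k, v⟩ is a chordless cycle. -/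
variable {V : Type*}

/-- Let p = ⟨v₁, …, v_k⟩ be a chordless path and v ∈ Adj(v_k) with
v ≠ v_{k-1}. Then exactly one of the following holds: (i) ⟨v₁, …, v_k, v⟩ is a
chordless path; (ii) (v_{k-1}, v) ∈ E; (iii) there is i ∈ {1, …, k-2} such that
⟨v_i, v_{i+1}, …, v_k, v⟩ is a chordless cycle (i is 1-indexed; below j = i−1). -/
theorem stmt6 {V : Type*} [Fintype V] (G : SimpleGraph V) (p : List V)
    (hk : 2 ≤ p.length) (hp : IsChordlessPathL G p) (v : V)
    (hadj : G.Adj (p.get ⟨p.length - 1, by omega⟩) v)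
    (hne : v ≠ p.get ⟨p.length - 2, by omega⟩) :
    (IsChordlessPathL G (p ++ [v]) ∨
     G.Adj (p.get ⟨p.length - 2, by omega⟩) v ∨
     (∃ j : ℕ, j + 3 ≤ p.length ∧ IsChordlessCycleL G (p.drop j ++ [v]))) ∧
    ¬ (IsChordlessPathL G (p ++ [v]) ∧ G.Adj (p.get ⟨p.length - 2, by omega⟩) v) ∧
    ¬ (IsChordlessPathL G (p ++ [v]) ∧
       ∃ j : ℕ, j + 3 ≤ p.length ∧ IsChordlessCycleL G (p.drop j ++ [v])) ∧
    ¬ (G.Adj (p.get ⟨p.length - 2, by omega⟩) v ∧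
       ∃ j : ℕ, j + 3 ≤ p.length ∧ IsChordlessCycleL G (p.drop j ++ [v])) := by
  obtain ⟨⟨hnd, hch⟩, hcl⟩ := hp
  have hch' : ∀ i (h : i + 1 < p.length), G.Adj p[i] p[i+1] :=
    List.isChain_iff_getElem.mp hch
  have hcl' : ∀ i j (hi : i < p.length) (hj : j < p.length), i + 1 < j → ¬ G.Adj p[i] p[j] :=
    fun i j hi hj h => hcl ⟨i, hi⟩ ⟨j, hj⟩ h
  simp only [List.get_eq_getElem] at hadj hne ⊢
  have hv : ∀ i (hi : i < p.length), v ≠ p[i] := by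
    intro i hi h
    by_cases h1 : i = p.length - 1
    · subst h1; rw [← h] at hadj; exact G.loopless.irrefl _ hadj
    by_cases h2 : i = p.length - 2
    · subst h2; exact hne h
    · exact hcl' i (p.length - 1) hi (by omega) (by omega) (h ▸ hadj.symm)
  have hsimple : ∀ j, j + 2 ≤ p.length → IsSimplePathL G (p.drop j ++ [v]) := by
    intro j hj
    constructor
    · rw [List.nodup_append]
      refine ⟨hnd.sublist (List.drop_sublist _ _), by simp, ?_⟩
      intro a ha b hb hab
      obtain rfl : b = v := by simpa using hb
      subst hab
      obtain ⟨i, hi, rfl⟩ := List.getElem_of_mem (List.mem_of_mem_drop ha)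
      exact hv i hi rfl
    · apply List.isChain_iff_getElem.mpr
      intro i hi
      simp only [List.length_append, List.length_drop, List.length_singleton] at hi
      rcases Nat.lt_or_ge (i + 1) (p.length - j) with h | h
      · rw [List.getElem_append_left (by simp; omega), List.getElem_append_left (by simp; omega)]
        simp only [List.getElem_drop]
        exact hch' (j + i) (by omega)
      · rw [List.getElem_append_left (by simp; omega), List.getElem_append_right (by simp; omega)]
        simp only [List.getElem_drop, List.getElem_singleton]
        have : j + i = p.length - 1 := by omega
        simpa only [this] using hadj
  have hhead : ∀ j (hj : j + 3 ≤ p.length), IsChordlessCycleL G (p.drop j ++ [v]) →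
      G.Adj p[j] v := by
    intro j hj h
    have := h.1.2.2 (by simp)
    rw [List.getLast_append_singleton, List.head_append_of_ne_nil (by simp; omega),
      List.head_drop] at this
    exact this.symm
  have hpath : IsChordlessPathL G (p ++ [v]) → ∀ i (hi : i + 1 < p.length), ¬ G.Adj p[i] v := by
    intro h i hi ha
    have := h.2 ⟨i, by simp; omega⟩ ⟨p.length, by simp⟩ hi
    simp only [List.get_eq_getElem] at this
    rw [List.getElem_append_left (by omega), List.getElem_append_right (by omega)] at this
    exact this (by simpa using ha)
  refine ⟨?_, fun h => hpath h.1 _ (by omega) h.2, ?_, ?_⟩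
  · classical
    by_cases hex : ∃ i, ∃ h : i + 1 < p.length, G.Adj p[i] v
    · right
      let P : ℕ → Prop := fun i => ∃ h : i + 1 < p.length, G.Adj p[i] v
      obtain ⟨i0, hi0⟩ := hex
      have hm : P (Nat.findGreatest P p.length) :=
        Nat.findGreatest_spec (P := P) (m := i0) (by have := hi0.1; omega) hi0
      have hmax : ∀ j, Nat.findGreatest P p.length < j → ∀ h : j + 1 < p.length, ¬ G.Adj p[j] v :=
        fun j hj h ha => Nat.findGreatest_is_greatest hj (by omega) ⟨h, ha⟩
      generalize Nat.findGreatest P p.length = m at hm hmax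
      obtain ⟨hm1, hm2⟩ := hm
      by_cases h2 : m = p.length - 2
      · left; subst h2; exact hm2
      right
      refine ⟨m, by omega, ⟨hsimple m (by omega), by simp; omega, ?_⟩, ?_⟩
      · intro _
        rw [List.getLast_append_singleton, List.head_append_of_ne_nil (by simp; omega),
          List.head_drop]
        exact hm2.symm
      · rintro ⟨i, hi⟩ ⟨j, hj⟩ hij ha
        simp only [List.get_eq_getElem] at ha hij ⊢
        simp only [List.length_append, List.length_drop, List.length_singleton] at hi hj ⊢
        by_contra hcon
        rw [List.getElem_append_left (by simp; omega)] at ha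
        rcases Nat.lt_or_ge j (p.length - m) with h | h
        · rw [List.getElem_append_left (by simp; omega)] at ha
          simp only [List.getElem_drop] at ha
          exact hcl' _ _ _ _ (by omega) ha
        · rw [List.getElem_append_right (by simp; omega)] at ha
          simp only [List.getElem_drop, List.getElem_singleton] at ha
          exact hmax (m + i) (by omega) (by omega) ha
    · left
      refine ⟨by simpa using hsimple 0 (by omega), ?_⟩
      rintro ⟨i, hi⟩ ⟨j, hj⟩ hij ha
      simp only [List.get_eq_getElem] at ha hij
      simp only [List.length_append, List.length_singleton] at hi hj
      rw [List.getElem_append_left (by omega)] at ha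
      rcases Nat.lt_or_ge j p.length with h | h
      · rw [List.getElem_append_left (by omega)] at ha
        exact hcl' _ _ _ _ hij ha
      · rw [List.getElem_append_right (by omega)] at ha
        simp only [List.getElem_singleton] at ha
        exact hex ⟨i, by omega, ha⟩
  · rintro ⟨h, j, hj, hc⟩
    exact hpath h j (by omega) (hhead j hj hc)
  · rintro ⟨h, j, hj, hc⟩
    have := hc.2 ⟨p.length - 2 - j, by simp; omega⟩ ⟨p.length - j, by simp⟩
      (by simp only []; omega)
    simp only [List.get_eq_getElem] at this
    rw [List.getElem_append_left (by simp; omega), List.getElem_append_right (by simp)] at this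
    simp only [List.getElem_drop, List.getElem_singleton] at this
    have e : j + (p.length - 2 - j) = p.length - 2 := by omega
    simp only [e] at this
    have := this h
    omega
end

section
/- Let p = ⟨v_1, v_2, …, v_k⟩ be a chordless path in a finite undirected simple graph G and let v ∈ Adj(v_k) with v ≠ v_{k−1}. Suppose (v_{k−1}, v) ∉ E and ⟨v_1, …, v_k, v⟩ is not a chordless path. Then there exists an index i ∈ {1, …, k−2} with (v, v_i) ∈ E, and for the largest such index i the sequence ⟨v_i, v_{i+1}, …, v_k, v⟩ is a chordless cycle in G. -/
variable {V : Type*}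

/-- Let p = ⟨v₁, …, v_k⟩ be a chordless path and v ∈ Adj(v_k) with
v ≠ v_{k-1}. Suppose (v_{k-1}, v) ∉ E and ⟨v₁, …, v_k, v⟩ is not a chordless
path. Then there is an index i ∈ {1, …, k-2} (0-indexed: j with j + 3 ≤ k) with
(v, v_i) ∈ E, and for the largest such index, ⟨v_i, v_{i+1}, …, v_k, v⟩ is a
chordless cycle in G. -/
theorem stmt8 {V : Type*} [Fintype V] (G : SimpleGraph V) (p : List V)
    (hk : 2 ≤ p.length) (hp : IsChordlessPathL G p) (v : V)
    (hadj : G.Adj (p.get ⟨p.length - 1, by omega⟩) v)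
    (hne : v ≠ p.get ⟨p.length - 2, by omega⟩)
    (hnadj : ¬ G.Adj (p.get ⟨p.length - 2, by omega⟩) v)
    (hnotcp : ¬ IsChordlessPathL G (p ++ [v])) :
    (∃ j : Fin p.length, (j : ℕ) + 3 ≤ p.length ∧ G.Adj v (p.get j)) ∧
    (∀ j : Fin p.length, (j : ℕ) + 3 ≤ p.length → G.Adj v (p.get j) →
      (∀ j' : Fin p.length, (j' : ℕ) + 3 ≤ p.length → G.Adj v (p.get j') →
        (j' : ℕ) ≤ (j : ℕ)) →
      IsChordlessCycleL G (p.drop (j : ℕ) ++ [v])) := by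
  obtain ⟨⟨hnd, hch⟩, hcl⟩ := hp
  have hcl' : ∀ (a b : ℕ) (ha : a < p.length) (hb : b < p.length), a + 1 < b →
      ¬ G.Adj p[a] p[b] := fun a b ha hb h => hcl ⟨a, ha⟩ ⟨b, hb⟩ h
  simp only [List.get_eq_getElem] at hadj hne hnadj ⊢
  have hvp : v ∉ p := by
    intro hv
    obtain ⟨m, hm, rfl⟩ := List.getElem_of_mem hv
    rcases Nat.lt_trichotomy (m + 1) (p.length - 1) with h | h | h
    · exact hcl' m (p.length - 1) hm (by omega) h hadj.symm
    · apply hne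
      congr 1
      omega
    · have : m = p.length - 1 := by omega
      subst this
      exact G.loopless.irrefl _ hadj
  have hpne : p ≠ [] := by
    rintro rfl
    simp at hk
  have hlast : p.getLast hpne = p[p.length - 1] := List.getLast_eq_getElem hpne
  have hsimple : ∀ n, n < p.length → IsSimplePathL G (p.drop n ++ [v]) := by
    intro n hn
    refine ⟨?_, ?_⟩
    · rw [List.nodup_append]
      refine ⟨hnd.sublist (List.drop_sublist n p), List.nodup_singleton v, ?_⟩
      intro a ha b hb hab
      rw [List.mem_singleton] at hb
      subst hb
      subst hab
      exact hvp (List.mem_of_mem_drop ha)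
    · refine List.isChain_append.2 ⟨List.IsChain.drop hch n, List.isChain_singleton v, ?_⟩
      intro x hx y hy
      have hxx : x = p[p.length - 1] := by
        rw [List.getLast?_drop, if_neg (by omega), List.getLast?_eq_getLast_of_ne_nil hpne] at hx
        simp only [Option.mem_def, Option.some.injEq] at hx
        rw [← hx, hlast]
      have hyy : y = v := by
        simpa using hy.symm
      rw [hxx, hyy]
      exact hadj
  refine ⟨?_, ?_⟩
  · by_contra hno
    push Not at hno
    apply hnotcp
    refine ⟨by simpa using hsimple 0 (by omega), ?_⟩
    rintro ⟨a, ha⟩ ⟨b, hb⟩ hab had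
    simp only [List.length_append, List.length_singleton] at ha hb
    simp only [List.get_eq_getElem] at had hab
    rw [List.getElem_append_left (by omega)] at had
    by_cases hbp : b < p.length
    · rw [List.getElem_append_left hbp] at had
      exact hcl' a b (by omega) hbp hab had
    · rw [List.getElem_append_right (by omega)] at had
      simp only [List.getElem_singleton] at had
      by_cases h3 : a + 3 ≤ p.length
      · exact hno ⟨a, by omega⟩ h3 had.symm
      · have : a = p.length - 2 := by omega
        subst this
        exact hnadj had
  · rintro ⟨j, hj⟩ h3 hvj hmax
    dsimp only at h3 hvj hmax ⊢
    refine ⟨⟨hsimple j hj, ?_, ?_⟩, ?_⟩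
    · simp only [List.length_append, List.length_drop, List.length_singleton]
      omega
    · intro hne'
      rw [List.getLast_append_singleton, List.head_eq_getElem,
        List.getElem_append_left (by simp only [List.length_drop]; omega), List.getElem_drop]
      exact hvj
    · rintro ⟨a, ha⟩ ⟨b, hb⟩ hab had
      simp only [List.length_append, List.length_singleton, List.length_drop] at ha hb ⊢
      simp only [List.get_eq_getElem] at had hab
      rw [List.getElem_append_left (by simp only [List.length_drop]; omega),
        List.getElem_drop] at had
      by_cases hbp : b < p.length - j
      · rw [List.getElem_append_left (by simp only [List.length_drop]; omega),
          List.getElem_drop] at had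
        by_contra hc
        exact hcl' (j + a) (j + b) (by omega) (by omega) (by omega) had
      · rw [List.getElem_append_right (by simp only [List.length_drop]; omega)] at had
        simp only [List.getElem_singleton] at had
        by_cases h3' : j + a + 3 ≤ p.length
        · have := hmax ⟨j + a, by omega⟩ h3' had.symm
          dsimp only at this
          omega
        · by_cases h2 : j + a = p.length - 2
          · exfalso
            apply hnadj
            simpa only [h2] using had
          · omega
end

section
/- Let G be a finite undirected simple graph with n vertices and ℓ : V → {1, 2, …, n} a vertex labeling. Every chordless cycle C = ⟨u_1, u_2, …, u_k⟩ in G with k ≥ 4 admits a representation (obtained by a cyclic rotation possibly followed by a reversal) ⟨w_1, w_2, …, w_k⟩ such that ℓ(w_2) = min{ℓ(u_i) | i = 1, …, k}, ℓ(w_1) < ℓ(w_3), and the initial triplet ⟨w_1, w_2, w_3⟩ belongs to T(G), i.e., w_1, w_3 ∈ Adj(w_2), ℓ(w_2) < ℓ(w_1) < ℓ(w_3), and (w_1, w_3) ∉ E. -/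
variable {V : Type*}

theorem aux_adj {V : Type*} (G : SimpleGraph V) (p : List V) (hcc : IsChordlessCycleL G p)
    (a b : ℕ) (ha : a < p.length) (hb : b < p.length)
    (h : b = a + 1 ∨ (a = p.length - 1 ∧ b = 0)) : G.Adj p[a] p[b] := by
  obtain ⟨⟨⟨_, hc⟩, _, hw⟩, _⟩ := hcc
  rcases h with rfl | ⟨rfl, rfl⟩
  · exact List.isChain_iff_getElem.1 hc a hb
  · have := hw (by intro h0; simp [h0] at ha)
    rwa [List.getLast_eq_getElem, List.head_eq_getElem] at this

theorem aux_nadj {V : Type*} (G : SimpleGraph V) (p : List V) (hk : 4 ≤ p.length)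
    (hcc : IsChordlessCycleL G p)
    (a b : ℕ) (ha : a < p.length) (hb : b < p.length)
    (h : b = a + 2 ∨ b + p.length = a + 2) : ¬ G.Adj p[a] p[b] := by
  intro hadj
  rcases h with h | h
  · have := hcc.2 ⟨a, ha⟩ ⟨b, hb⟩ (by simp; omega) hadj
    simp at this
    omega
  · have := hcc.2 ⟨b, hb⟩ ⟨a, ha⟩ (by simp; omega) hadj.symm
    simp at this
    omega

theorem aux_mod (n x : ℕ) (hx : x < 2 * n) : (x < n ∧ x % n = x) ∨ (n ≤ x ∧ x % n + n = x) := by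
  rcases lt_or_ge x n with h | h
  · exact Or.inl ⟨h, Nat.mod_eq_of_lt h⟩
  · refine Or.inr ⟨h, ?_⟩
    rw [Nat.mod_eq_sub_mod h, Nat.mod_eq_of_lt (by omega)]
    omega

/-- Every chordless cycle C = ⟨u₁, …, u_k⟩ with k ≥ 4 admits a
representation ⟨w₁, …, w_k⟩ (a cyclic rotation possibly followed by a reversal)
such that ℓ(w₂) is the minimum label on the cycle, ℓ(w₁) < ℓ(w₃), and the
initial triplet ⟨w₁, w₂, w₃⟩ belongs to T(G): w₁, w₃ ∈ Adj(w₂),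
ℓ(w₂) < ℓ(w₁) < ℓ(w₃) and (w₁, w₃) ∉ E. -/
theorem stmt9 {V : Type*} [Fintype V] (G : SimpleGraph V)
    (ℓ : V ≃ Fin (Fintype.card V)) (p : List V)
    (hk : 4 ≤ p.length) (hcc : IsChordlessCycleL G p) :
    ∃ q : List V, (∃ i, q = p.rotate i ∨ q = (p.rotate i).reverse) ∧
      ∃ h : 3 ≤ q.length,
        (∀ v ∈ p, ℓ (q.get ⟨1, by omega⟩) ≤ ℓ v) ∧
        ℓ (q.get ⟨0, by omega⟩) < ℓ (q.get ⟨2, by omega⟩) ∧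
        G.Adj (q.get ⟨1, by omega⟩) (q.get ⟨0, by omega⟩) ∧
        G.Adj (q.get ⟨1, by omega⟩) (q.get ⟨2, by omega⟩) ∧
        ℓ (q.get ⟨1, by omega⟩) < ℓ (q.get ⟨0, by omega⟩) ∧
        ¬ G.Adj (q.get ⟨0, by omega⟩) (q.get ⟨2, by omega⟩) := by
  have hnd : p.Nodup := hcc.1.1.1
  obtain ⟨v, hv, hmin⟩ := Set.exists_min_image {x | x ∈ p} ℓ (List.finite_toSet p)
    ⟨p[0], List.getElem_mem (by omega)⟩
  obtain ⟨m, hm, rfl⟩ := List.getElem_of_mem hv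
  have hmin' : ∀ v ∈ p, ℓ p[m] ≤ ℓ v := fun v hv => hmin v hv
  obtain ⟨a, ha, hma⟩ : ∃ a, a < p.length ∧ (m = a + 1 ∨ (a = p.length - 1 ∧ m = 0)) := by
    rcases m with _ | m
    · exact ⟨p.length - 1, by omega, by omega⟩
    · exact ⟨m, by omega, by omega⟩
  obtain ⟨c, hc, hmc⟩ : ∃ c, c < p.length ∧ (c = m + 1 ∨ (m = p.length - 1 ∧ c = 0)) := by
    by_cases h : m + 1 < p.length
    · exact ⟨m + 1, h, by omega⟩
    · exact ⟨0, by omega, by omega⟩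
  have h1 := aux_adj G p hcc a m ha hm hma
  have h2 := aux_adj G p hcc m c hm hc hmc
  have h3 := aux_nadj G p hk hcc a c ha hc (by omega)
  have hlt : ∀ x (hx : x < p.length), x ≠ m → ℓ p[m] < ℓ p[x] := by
    intro x hx hne
    refine lt_of_le_of_ne (hmin' _ (List.getElem_mem hx)) ?_
    intro he
    exact hne ((hnd.getElem_inj_iff).1 (ℓ.injective he)).symm
  have hne : ℓ p[a] ≠ ℓ p[c] := by
    intro he
    have := (hnd.getElem_inj_iff).1 (ℓ.injective he)
    omega
  rcases lt_or_gt_of_ne hne with hl | hl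
  · refine ⟨p.rotate a, ⟨a, Or.inl rfl⟩, by simp; omega, ?_⟩
    have e0 : (0 + a) % p.length = a := by
      have := aux_mod p.length (0 + a) (by omega); omega
    have e1 : (1 + a) % p.length = m := by
      have := aux_mod p.length (1 + a) (by omega); omega
    have e2 : (2 + a) % p.length = c := by
      have := aux_mod p.length (2 + a) (by omega); omega
    simp only [List.get_eq_getElem, List.getElem_rotate, e0, e1, e2]
    exact ⟨hmin', hl, h1.symm, h2, hlt a ha (by omega), h3⟩
  · refine ⟨(p.rotate (c + 1)).reverse, ⟨c + 1, Or.inr rfl⟩, by simp; omega, ?_⟩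
    have e0 : (p.length - 1 - 0 + (c + 1)) % p.length = c := by
      have := aux_mod p.length (p.length - 1 - 0 + (c + 1)) (by omega); omega
    have e1 : (p.length - 1 - 1 + (c + 1)) % p.length = m := by
      have := aux_mod p.length (p.length - 1 - 1 + (c + 1)) (by omega); omega
    have e2 : (p.length - 1 - 2 + (c + 1)) % p.length = a := by
      have := aux_mod p.length (p.length - 1 - 2 + (c + 1)) (by omega); omega
    simp only [List.get_eq_getElem, List.getElem_reverse, List.getElem_rotate,
      List.length_rotate, e0, e1, e2]
    exact ⟨hmin', hl, h2, h1.symm, hlt c hc (by omega), fun h => h3 h.symm⟩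
end
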